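/- Let n ≥ 2 be an integer, t > 0, and set c := n³(n−1). For t′ > 0 let p_{t′}(x) = (2^{t′−2}/(π·Γ(t′))) · ‖Γ((t′ + ix)/2)‖² be the continuous binomial/Beta density, and define q_t := p_{2nt/c}. Then q_t is a probability density on ℝ (q_t ≥ 0 and ∫_ℝ q_t = 1), and for every real s with √(c/2)·|s| < π/2, ∫_{−∞}^{∞} e^{s·√(c/2)·x} · q_t(x) dx = (cos(√(c/2)·s))^{−2nt/c}. -/

import Mathlib

open MeasureTheory

/-!
The Gamma function on a vertical line is a Mellin transform: for `0 < re k`,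
`k ^ (-z) * Γ(z) = ∫₀^∞ r ^ (z - 1) * exp (-k r) dr`, first for real `k` and then by analytic
continuation in `k`. For `k = exp (i θ)` with `|θ| < π / 2` and `z = σ + i y`, the factor
`k ^ (-z)` has modulus `exp (θ y)`, so the exponential weight of the moment generating function is
produced by rotating `k`. The Plancherel identity for the Mellin transform then turns
`∫ exp (2 θ y) |Γ(σ + i y)|² dy` into `2 π ∫₀^∞ r ^ (2 σ - 1) * exp (-2 r cos θ) dr`, which is again
a Gamma integral.
-/

open Complex Set Filter Topology FourierTransform

section Plancherel

variable {V E : Type*} [NormedAddCommGroup V] [InnerProductSpace ℝ V] [FiniteDimensional ℝ V]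
  [MeasurableSpace V] [BorelSpace V] [NormedAddCommGroup E] [InnerProductSpace ℂ E]
  [CompleteSpace E]

theorem integral_norm_sq_fourier_eq {f : V → E} (hfc : Continuous f) (hf : Integrable f)
    (hFf : Integrable (𝓕 f)) : ∫ ξ, ‖𝓕 f ξ‖ ^ 2 = ∫ x, ‖f x‖ ^ 2 := by
  have hadj : ∫ ξ, inner ℂ (𝓕 f ξ) (𝓕 f ξ) = ∫ x, inner ℂ (f x) (𝓕⁻ (𝓕 f) x) := by
    simpa [Real.fourierInv_eq, Real.fourier_eq, VectorFourier.fourierIntegral] using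
      VectorFourier.integral_sesq_fourierIntegral_eq_neg_flip (innerSL ℂ) (L := innerₗ V)
        Real.continuous_fourierChar continuous_inner hf hFf
  rw [hfc.fourierInv_fourier_eq hf hFf] at hadj
  simp only [inner_self_eq_norm_sq_to_K] at hadj
  exact_mod_cast hadj

end Plancherel

section ExpSubstitution

variable {E : Type*} [NormedAddCommGroup E] [NormedSpace ℝ E]

theorem image_exp_neg_univ : (fun u : ℝ ↦ Real.exp (-u)) '' univ = Ioi 0 := by
  rw [image_univ, ← Real.range_exp]
  exact neg_surjective.range_comp Real.exp

theorem injOn_exp_neg : InjOn (fun u : ℝ ↦ Real.exp (-u)) univ :=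
  (Real.exp_injective.comp neg_injective).injOn

theorem hasDerivWithinAt_exp_neg (u : ℝ) (s : Set ℝ) :
    HasDerivWithinAt (fun u ↦ Real.exp (-u)) (-Real.exp (-u)) s u := by
  simpa only [mul_neg_one] using (hasDerivAt_neg u).exp.hasDerivWithinAt

theorem abs_neg_exp_neg_smul_rpow_smul (a u : ℝ) (v : E) :
    |-Real.exp (-u)| • Real.exp (-u) ^ (a - 1) • v = Real.exp (-a * u) • v := by
  rw [smul_smul, abs_neg, Real.abs_exp, ← Real.exp_mul, ← Real.exp_add]
  ring_nf

theorem integrableOn_Ioi_rpow_smul_iff (f : ℝ → E) (a : ℝ) :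
    IntegrableOn (fun r ↦ r ^ (a - 1) • f r) (Ioi 0) ↔
      Integrable fun u ↦ Real.exp (-a * u) • f (Real.exp (-u)) := by
  rw [← image_exp_neg_univ, integrableOn_image_iff_integrableOn_abs_deriv_smul MeasurableSet.univ
    (fun u _ ↦ hasDerivWithinAt_exp_neg u univ) injOn_exp_neg]
  simp only [abs_neg_exp_neg_smul_rpow_smul, integrableOn_univ]

theorem integral_Ioi_rpow_smul_eq (f : ℝ → E) (a : ℝ) :
    ∫ r in Ioi (0 : ℝ), r ^ (a - 1) • f r = ∫ u, Real.exp (-a * u) • f (Real.exp (-u)) := by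
  rw [← image_exp_neg_univ, integral_image_eq_integral_abs_deriv_smul MeasurableSet.univ
    (fun u _ ↦ hasDerivWithinAt_exp_neg u univ) injOn_exp_neg]
  simp only [abs_neg_exp_neg_smul_rpow_smul, Measure.restrict_univ]

end ExpSubstitution

section Mellin

variable {E : Type*} [NormedAddCommGroup E]

theorem norm_mellin_le [NormedSpace ℂ E] (f : ℝ → E) (s : ℂ) :
    ‖mellin f s‖ ≤ ∫ r in Ioi (0 : ℝ), r ^ (s.re - 1) * ‖f r‖ := by
  refine (norm_integral_le_integral_norm _).trans_eq
    (setIntegral_congr_fun measurableSet_Ioi fun r hr ↦ ?_)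
  simp only [norm_smul, norm_cpow_eq_rpow_re_of_pos hr, sub_re, one_re]

theorem mellinConvergent_ofReal_iff [NormedSpace ℂ E] {f : ℝ → E} {σ : ℝ} :
    MellinConvergent f σ ↔ Integrable fun u ↦ Real.exp (-σ * u) • f (Real.exp (-u)) := by
  rw [← integrableOn_Ioi_rpow_smul_iff]
  refine integrableOn_congr_fun (fun r (hr : 0 < r) ↦ ?_) measurableSet_Ioi
  rw [← ofReal_one, ← ofReal_sub, ← ofReal_cpow hr.le, coe_smul]

theorem integral_norm_sq_mellin_eq [InnerProductSpace ℂ E] [CompleteSpace E] {f : ℝ → E} {σ : ℝ}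
    (hfc : ContinuousOn f (Ioi 0)) (hf : MellinConvergent f σ)
    (hFf : VerticalIntegrable (mellin f) σ) :
    ∫ y : ℝ, ‖mellin f (σ + y * I)‖ ^ 2 =
      2 * Real.pi * ∫ r in Ioi (0 : ℝ), r ^ (2 * σ - 1) * ‖f r‖ ^ 2 := by
  have hpi : 2 * Real.pi ≠ 0 := by positivity
  set g : ℝ → E := fun u ↦ Real.exp (-σ * u) • f (Real.exp (-u)) with hg
  have hgc : Continuous g :=
    (by fun_prop : Continuous fun u : ℝ ↦ Real.exp (-σ * u)).smul
      (hfc.comp_continuous (by fun_prop) fun u ↦ Real.exp_pos (-u))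
  have hmellin (y : ℝ) : mellin f (σ + y * I) = 𝓕 g (y / (2 * Real.pi)) := by
    simp [mellin_eq_fourier, hg]
  have hFg : Integrable (𝓕 g) := by
    simpa only [hmellin, mul_div_cancel_right₀ _ hpi] using hFf.comp_mul_right' hpi
  have hnorm (u : ℝ) : ‖g u‖ ^ 2 = Real.exp (-(2 * σ) * u) • ‖f (Real.exp (-u))‖ ^ 2 := by
    rw [norm_smul, mul_pow, Real.norm_of_nonneg (Real.exp_pos _).le, ← Real.exp_nat_mul,
      smul_eq_mul]
    ring_nf
  calc ∫ y : ℝ, ‖mellin f (σ + y * I)‖ ^ 2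
      = ∫ y : ℝ, ‖𝓕 g (y / (2 * Real.pi))‖ ^ 2 := by simp only [hmellin]
    _ = 2 * Real.pi * ∫ ξ, ‖𝓕 g ξ‖ ^ 2 := by
        rw [Measure.integral_comp_div (fun ξ ↦ ‖𝓕 g ξ‖ ^ 2), abs_of_pos (by positivity),
          smul_eq_mul]
    _ = 2 * Real.pi * ∫ u, ‖g u‖ ^ 2 := by
        rw [integral_norm_sq_fourier_eq hgc (mellinConvergent_ofReal_iff.mp hf) hFg]
    _ = 2 * Real.pi * ∫ r in Ioi (0 : ℝ), r ^ (2 * σ - 1) * ‖f r‖ ^ 2 := by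
        simp only [hnorm]
        rw [← integral_Ioi_rpow_smul_eq fun r ↦ ‖f r‖ ^ 2]
        simp only [smul_eq_mul]

end Mellin

section Laplace

variable {E : Type*} [NormedAddCommGroup E] [NormedSpace ℂ E]

theorem norm_deriv_cexp_neg_mul_smul_le {x₁ x₂ r : ℝ} {z : ℂ} (hx : x₁ < x₂) (hz : x₂ ≤ z.re)
    (hr : 0 ≤ r) (v : E) :
    ‖(cexp (-(z * r)) * -r) • v‖ ≤ (x₂ - x₁)⁻¹ * ‖Real.exp (-(x₁ * r)) • v‖ := by
  have hlin : r ≤ (x₂ - x₁)⁻¹ * Real.exp ((x₂ - x₁) * r) := by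
    rw [le_inv_mul_iff₀ (sub_pos.mpr hx)]
    linarith [Real.add_one_le_exp ((x₂ - x₁) * r)]
  have hsplit : Real.exp (-(x₂ * r)) * Real.exp ((x₂ - x₁) * r) = Real.exp (-(x₁ * r)) := by
    rw [← Real.exp_add]
    ring_nf
  calc ‖(cexp (-(z * r)) * -r) • v‖
      = Real.exp (-(z.re * r)) * r * ‖v‖ := by
        simp [norm_smul, Complex.norm_exp, abs_of_nonneg hr]
    _ ≤ Real.exp (-(x₂ * r)) * ((x₂ - x₁)⁻¹ * Real.exp ((x₂ - x₁) * r)) * ‖v‖ := by gcongr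
    _ = (x₂ - x₁)⁻¹ * ‖Real.exp (-(x₁ * r)) • v‖ := by
        rw [norm_smul, Real.norm_of_nonneg (Real.exp_pos _).le, ← hsplit]
        ring

theorem differentiableOn_integral_cexp_neg_mul_smul {f : ℝ → E} {x₀ : ℝ}
    (hf : ∀ x > x₀, IntegrableOn (fun r : ℝ ↦ Real.exp (-(x * r)) • f r) (Ioi 0)) :
    DifferentiableOn ℂ (fun k : ℂ ↦ ∫ r : ℝ in Ioi 0, cexp (-(k * r)) • f r)
      {k | x₀ < k.re} := by
  intro k (hk : x₀ < k.re)
  obtain ⟨x₁, hx₀₁, hx₁k⟩ := exists_between hk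
  obtain ⟨x₂, hx₁₂, hx₂k⟩ := exists_between hx₁k
  have hmeas {c : ℝ → ℂ} (hc : Continuous c) :
      AEStronglyMeasurable (fun r ↦ c r • f r) (volume.restrict (Ioi 0)) := by
    have hexp : Continuous fun r : ℝ ↦ c r * cexp (x₁ * r) := by fun_prop
    refine (hexp.aestronglyMeasurable.smul (hf x₁ hx₀₁).aestronglyMeasurable).congr
      (ae_of_all _ fun r ↦ ?_)
    simp [← coe_smul, smul_smul, mul_assoc, ← Complex.exp_add]
  have hint : Integrable (fun r : ℝ ↦ cexp (-(k * r)) • f r) (volume.restrict (Ioi 0)) := by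
    refine Integrable.mono (hf k.re hk) (hmeas (by fun_prop)) (ae_of_all _ fun r ↦ ?_)
    simp [norm_smul, Complex.norm_exp]
  have hderiv (r : ℝ) (z : ℂ) :
      HasDerivAt (fun z : ℂ ↦ cexp (-(z * r)) • f r) ((cexp (-(z * r)) * -r) • f r) z := by
    simpa using ((hasDerivAt_mul_const (r : ℂ)).neg.cexp).smul_const (f r)
  refine (hasDerivAt_integral_of_dominated_loc_of_deriv_le (𝕜 := ℂ)
    (F := fun z (r : ℝ) ↦ cexp (-(z * r)) • f r)
    (F' := fun z (r : ℝ) ↦ (cexp (-(z * r)) * -r) • f r)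
    ((isOpen_lt continuous_const continuous_re).mem_nhds hx₂k)
    (Eventually.of_forall fun z ↦ hmeas (by fun_prop)) hint (hmeas (by fun_prop)) ?_
    ((hf x₁ hx₀₁).norm.const_mul (x₂ - x₁)⁻¹)
    (ae_of_all _ fun r z _ ↦ hderiv r z)).2.differentiableAt.differentiableWithinAt
  filter_upwards [ae_restrict_mem measurableSet_Ioi] with r (hr : 0 < r) z (hz : x₂ < z.re)
  exact norm_deriv_cexp_neg_mul_smul_le hx₁₂ hz.le hr.le (f r)

end Laplace

section MellinExp

variable {a k : ℂ} {σ : ℝ}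

theorem mellinConvergent_cexp_neg_mul (ha : 0 < a.re) (hk : 0 < k.re) :
    MellinConvergent (fun r : ℝ ↦ cexp (-(k * r))) a := by
  have hcont : Continuous fun r : ℝ ↦ cexp (-(k * r)) := by fun_prop
  refine (mellin_convergent_iff_norm subset_rfl measurableSet_Ioi
    hcont.aestronglyMeasurable).mpr ?_
  simpa [Complex.norm_exp] using
    integrableOn_rpow_mul_exp_neg_mul_rpow (s := a.re - 1) (by linarith) one_pos hk

theorem tendsto_ofReal_nhdsNE (x : ℝ) : Tendsto ((↑) : ℝ → ℂ) (𝓝[≠] x) (𝓝[≠] (x : ℂ)) :=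
  continuous_ofReal.continuousWithinAt.tendsto_nhdsWithin fun _ hy ↦ ofReal_injective.ne hy

theorem mellin_cexp_neg_mul (ha : 0 < a.re) (hk : 0 < k.re) :
    mellin (fun r : ℝ ↦ cexp (-(k * r))) a = k ^ (-a) * Gamma a := by
  have hopen : IsOpen {k : ℂ | 0 < k.re} := isOpen_lt continuous_const continuous_re
  have hleft : DifferentiableOn ℂ (fun k : ℂ ↦ mellin (fun r : ℝ ↦ cexp (-(k * r))) a)
      {k | 0 < k.re} := by
    simp only [mellin, smul_eq_mul, mul_comm ((_ : ℂ) ^ (a - 1))]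
    refine differentiableOn_integral_cexp_neg_mul_smul fun x hx ↦ ?_
    simpa [MellinConvergent, mul_comm] using
      mellinConvergent_cexp_neg_mul ha (k := x) (by simpa using hx)
  have hright : DifferentiableOn ℂ (fun k : ℂ ↦ k ^ (-a) * Gamma a) {k | 0 < k.re} := fun k hk ↦
    ((differentiableAt_id.cpow_const (Or.inl hk)).mul_const _).differentiableWithinAt
  have hreal {x : ℝ} (hx : 0 < x) :
      mellin (fun r : ℝ ↦ cexp (-(x * r))) a = (x : ℂ) ^ (-a) * Gamma a := by
    rw [cpow_neg, ← inv_cpow _ _ (by simp [arg_ofReal_of_nonneg hx.le, Real.pi_ne_zero.symm]),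
      ← one_div]
    exact integral_cpow_mul_exp_neg_mul_Ioi ha hx
  refine (hleft.analyticOnNhd hopen).eqOn_of_preconnected_of_frequently_eq
    (hright.analyticOnNhd hopen) (convex_halfSpace_re_gt 0).isPreconnected
    (z₀ := ((1 : ℝ) : ℂ)) (by simp) ?_ hk
  refine (tendsto_ofReal_nhdsNE 1).frequently (Eventually.frequently ?_)
  filter_upwards [nhdsWithin_le_nhds (lt_mem_nhds one_pos)] with x hx using hreal hx

theorem mul_mellin_cexp_neg_mul_add_one (ha : 0 < a.re) (hk : 0 < k.re) :
    k * mellin (fun r : ℝ ↦ cexp (-(k * r))) (a + 1) =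
      a * mellin (fun r : ℝ ↦ cexp (-(k * r))) a := by
  have ha0 : a ≠ 0 := ne_zero_of_re_pos ha
  have hk0 : k ≠ 0 := ne_zero_of_re_pos hk
  have ha1 : 0 < (a + 1).re := by rw [add_re, one_re]; positivity
  rw [mellin_cexp_neg_mul ha hk, mellin_cexp_neg_mul ha1 hk, Gamma_add_one a ha0, neg_add,
    cpow_add _ _ hk0, cpow_neg_one]
  field_simp

theorem differentiableAt_Gamma_of_re_pos (ha : 0 < a.re) : DifferentiableAt ℂ Gamma a := by
  refine differentiableAt_Gamma a fun m hm ↦ ?_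
  rw [hm, neg_re, natCast_re, neg_pos] at ha
  exact (m.cast_nonneg.trans_lt ha).false

theorem continuous_mellin_cexp_neg_mul_vertical (hσ : 0 < σ) (hk : 0 < k.re) :
    Continuous fun y : ℝ ↦ mellin (fun r : ℝ ↦ cexp (-(k * r))) (σ + y * I) := by
  have hre (y : ℝ) : 0 < (σ + y * I : ℂ).re := by simpa using hσ
  simp only [mellin_cexp_neg_mul (hre _) hk]
  have hcpow : Continuous fun y : ℝ ↦ k ^ (-(σ + y * I)) :=
    Continuous.const_cpow (by fun_prop) (Or.inl (ne_zero_of_re_pos hk))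
  have hGamma : Continuous fun y : ℝ ↦ Gamma (σ + y * I) :=
    continuous_iff_continuousAt.mpr fun y ↦
      ContinuousAt.comp (g := Gamma) (differentiableAt_Gamma_of_re_pos (hre y)).continuousAt
        (by fun_prop)
  exact hcpow.mul hGamma

theorem exists_norm_mellin_cexp_neg_mul_le (hσ : 0 < σ) (hk : 0 < k.re) :
    ∃ C, ∀ y : ℝ, ‖mellin (fun r : ℝ ↦ cexp (-(k * r))) (σ + y * I)‖ ≤ C * (1 + y ^ 2)⁻¹ := by
  set M : ℂ → ℂ := mellin fun r : ℝ ↦ cexp (-(k * r))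
  set A : ℝ → ℝ := fun s ↦ ∫ r in Ioi (0 : ℝ), r ^ (s - 1) * ‖cexp (-(k * r))‖
  refine ⟨A σ + ‖k‖ ^ 2 * A (σ + 2), fun y ↦ ?_⟩
  set z : ℂ := σ + y * I with hz
  have hre : z.re = σ := by simp [hz]
  have hnorm : ‖M z‖ ≤ A σ := by simpa only [hre] using norm_mellin_le _ z
  have hnorm_add_two : ‖M (z + 2)‖ ≤ A (σ + 2) := by
    simpa only [add_re, re_ofNat, hre] using norm_mellin_le _ (z + 2)
  -- Applying the recurrence twice trades two powers of `z` for a shift.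
  have hrec : z * (z + 1) * M z = k ^ 2 * M (z + 2) := by
    have h₁ := mul_mellin_cexp_neg_mul_add_one (a := z) (by rwa [hre]) hk
    have h₂ := mul_mellin_cexp_neg_mul_add_one (a := z + 1)
      (by rw [add_re, hre, one_re]; positivity) hk
    rw [add_assoc, one_add_one_eq_two] at h₂
    linear_combination -k * h₂ - (z + 1) * h₁
  have hsq : y ^ 2 ≤ ‖z * (z + 1)‖ := by
    have h₁ : |y| ≤ ‖z‖ := by simpa [hz] using abs_im_le_norm z
    have h₂ : |y| ≤ ‖z + 1‖ := by simpa [hz] using abs_im_le_norm (z + 1)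
    rw [← sq_abs, sq, norm_mul]
    gcongr
  rw [← div_eq_mul_inv, le_div_iff₀ (by positivity)]
  calc ‖M z‖ * (1 + y ^ 2)
      ≤ ‖M z‖ * (1 + ‖z * (z + 1)‖) := by gcongr
    _ = ‖M z‖ + ‖k‖ ^ 2 * ‖M (z + 2)‖ := by
        rw [← norm_pow, ← norm_mul (k ^ 2), ← hrec, norm_mul _ (M z)]
        ring
    _ ≤ A σ + ‖k‖ ^ 2 * A (σ + 2) := by gcongr

theorem verticalIntegrable_mellin_cexp_neg_mul (hσ : 0 < σ) (hk : 0 < k.re) :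
    VerticalIntegrable (mellin fun r : ℝ ↦ cexp (-(k * r))) σ := by
  obtain ⟨C, hC⟩ := exists_norm_mellin_cexp_neg_mul_le hσ hk
  exact (integrable_inv_one_add_sq.const_mul C).mono'
    (continuous_mellin_cexp_neg_mul_vertical hσ hk).aestronglyMeasurable (ae_of_all _ hC)

end MellinExp

theorem norm_cexp_mul_I_cpow {θ : ℝ} (hθ : θ ∈ Ioc (-Real.pi) Real.pi) (w : ℂ) :
    ‖cexp (θ * I) ^ w‖ = Real.exp (-(θ * w.im)) := by
  have harg : arg (cexp (θ * I)) = θ := by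
    rw [exp_mul_I, arg_cos_add_sin_mul_I hθ]
  rw [norm_cpow_of_ne_zero (exp_ne_zero _), norm_exp_ofReal_mul_I, Real.one_rpow, harg, one_div,
    Real.exp_neg]

theorem integral_exp_mul_norm_sq_Gamma {σ θ : ℝ} (hσ : 0 < σ) (hθ : |θ| < Real.pi / 2) :
    ∫ y : ℝ, Real.exp (2 * θ * y) * ‖Gamma (σ + y * I)‖ ^ 2 =
      2 * Real.pi * Real.Gamma (2 * σ) * (2 * Real.cos θ) ^ (-(2 * σ)) := by
  obtain ⟨hθl, hθr⟩ := abs_lt.mp hθ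
  have hcos : 0 < Real.cos θ := Real.cos_pos_of_mem_Ioo ⟨hθl, hθr⟩
  set k : ℂ := cexp (θ * I)
  have hre : k.re = Real.cos θ := exp_ofReal_mul_I_re θ
  have hk : 0 < k.re := hre ▸ hcos
  have hmellin (y : ℝ) : ‖mellin (fun r : ℝ ↦ cexp (-(k * r))) (σ + y * I)‖ ^ 2 =
      Real.exp (2 * θ * y) * ‖Gamma (σ + y * I)‖ ^ 2 := by
    rw [mellin_cexp_neg_mul (by simpa using hσ) hk, norm_mul,
      norm_cexp_mul_I_cpow ⟨by linarith, by linarith⟩, mul_pow, ← Real.exp_nat_mul]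
    simp [mul_assoc]
  have hexp (r : ℝ) : ‖cexp (-(k * r))‖ ^ 2 = Real.exp (-(2 * Real.cos θ * r)) := by
    rw [Complex.norm_exp, ← Real.exp_nat_mul, neg_re, re_mul_ofReal, hre]
    ring_nf
  calc ∫ y : ℝ, Real.exp (2 * θ * y) * ‖Gamma (σ + y * I)‖ ^ 2
      = ∫ y : ℝ, ‖mellin (fun r : ℝ ↦ cexp (-(k * r))) (σ + y * I)‖ ^ 2 := by simp only [hmellin]
    _ = 2 * Real.pi * ∫ r in Ioi (0 : ℝ), r ^ (2 * σ - 1) * ‖cexp (-(k * r))‖ ^ 2 :=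
        integral_norm_sq_mellin_eq (by fun_prop)
          (mellinConvergent_cexp_neg_mul (by simpa using hσ) hk)
          (verticalIntegrable_mellin_cexp_neg_mul hσ hk)
    _ = 2 * Real.pi * Real.Gamma (2 * σ) * (2 * Real.cos θ) ^ (-(2 * σ)) := by
        simp only [hexp]
        rw [Real.integral_rpow_mul_exp_neg_mul_Ioi (by positivity) (by positivity), one_div,
          Real.inv_rpow (by positivity), Real.rpow_neg (by positivity)]
        ring

/-- The continuous binomial (Beta) density `p_t` of the Meixner–Pollaczek family, with shape
parameter `0 < t`. -/
noncomputable def continuousBinomialPDF (t x : ℝ) : ℝ :=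
  2 ^ (t - 2) / (Real.pi * Real.Gamma t) * ‖Gamma ((t + x * I) / 2)‖ ^ 2

namespace continuousBinomialPDF

variable {t : ℝ}

theorem nonneg (ht : 0 < t) (x : ℝ) : 0 ≤ continuousBinomialPDF t x := by
  unfold continuousBinomialPDF
  positivity

theorem integral_exp_mul (ht : 0 < t) {s : ℝ} (hs : |s| < Real.pi / 2) :
    ∫ x, Real.exp (s * x) * continuousBinomialPDF t x = Real.cos s ^ (-t) := by
  have hcos : 0 < Real.cos s := Real.cos_pos_of_mem_Ioo (abs_lt.mp hs)
  have hscale (x : ℝ) : Real.exp (s * x) * continuousBinomialPDF t x =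
      2 ^ (t - 2) / (Real.pi * Real.Gamma t) *
        (Real.exp (2 * s * (x / 2)) * ‖Gamma ((t / 2 : ℝ) + (x / 2 : ℝ) * I)‖ ^ 2) := by
    have harg : ((t + x * I) / 2 : ℂ) = (t / 2 : ℝ) + (x / 2 : ℝ) * I := by push_cast; ring
    rw [continuousBinomialPDF, harg]
    ring_nf
  simp only [hscale]
  rw [integral_const_mul, Measure.integral_comp_div
      (fun y : ℝ ↦ Real.exp (2 * s * y) * ‖Gamma ((t / 2 : ℝ) + y * I)‖ ^ 2),
    integral_exp_mul_norm_sq_Gamma (half_pos ht) hs, mul_div_cancel₀ t two_ne_zero,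
    Real.mul_rpow two_pos.le hcos.le, Real.rpow_neg two_pos.le, Real.rpow_sub two_pos]
  simp only [Nat.abs_ofNat, smul_eq_mul, Real.rpow_two]
  field_simp

theorem integral_eq_one (ht : 0 < t) : ∫ x, continuousBinomialPDF t x = 1 := by
  simpa using integral_exp_mul ht (s := 0) (by simpa using Real.pi_pos)

end continuousBinomialPDF

theorem trhpwn_scaled_beta_mgf (n : ℕ) (hn : 2 ≤ n) (t : ℝ) (ht : 0 < t)
    (c : ℝ) (hc : c = n ^ 3 * (n - 1))
    (p : ℝ → ℝ → ℝ)
    (hp : ∀ t' : ℝ, 0 < t' → ∀ x : ℝ,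
      p t' x = 2 ^ (t' - 2) / (Real.pi * Real.Gamma t') *
        ‖Complex.Gamma ((t' + x * Complex.I) / 2)‖ ^ 2)
    (q : ℝ → ℝ) (hq : q = p (2 * n * t / c)) :
    (∀ x : ℝ, 0 ≤ q x) ∧ (∫ x : ℝ, q x) = 1 ∧
    ∀ s : ℝ, Real.sqrt (c / 2) * |s| < Real.pi / 2 →
      ∫ x : ℝ, Real.exp (s * Real.sqrt (c / 2) * x) * q x =
        Real.cos (Real.sqrt (c / 2) * s) ^ (-(2 * n * t / c)) := by
  have hn_real : (2 : ℝ) ≤ n := by exact_mod_cast hn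
  have hc_pos : 0 < c := hc ▸ mul_pos (by positivity) (by linarith)
  have hparam : 0 < 2 * n * t / c := by positivity
  obtain rfl : q = continuousBinomialPDF (2 * n * t / c) := hq.trans (funext (hp _ hparam))
  refine ⟨continuousBinomialPDF.nonneg hparam, continuousBinomialPDF.integral_eq_one hparam,
    fun s hs ↦ ?_⟩
  have habs : |s * Real.sqrt (c / 2)| < Real.pi / 2 := by
    rwa [abs_mul, abs_of_nonneg (Real.sqrt_nonneg _), mul_comm]
  rw [continuousBinomialPDF.integral_exp_mul hparam habs, mul_comm s]
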